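/- arXiv:2308.08080 — 4 statements merged into one kernel-verified Lean document; each statement's English description precedes it below -/
import Mathlib

section
/- Let 𝒯 be a triangulated category admitting all small coproducts, equipped with a monoidal structure, and let E be an object of 𝒯 such that the endofunctor (−) ⊗ E is exact (commutes with the shift and sends distinguished triangles to distinguished triangles) and preserves small coproducts. Then for every object G of 𝒯 and every j ≥ 0, if T belongs to ⟨G⟩̄_j then T ⊗ E belongs to ⟨G ⊗ E⟩̄_j. -/
/-!
Tensoring with `E` is an exact functor preserving small coproducts, and the result holds for
any such endofunctor `F` (`map_mem_bigLevel`). For level one, the objects `X` with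
`F.obj X ∈ bigOne (F.obj G)` form a collection containing `G` and closed under shifts, small
coproducts and retracts, because `F` commutes with each of these up to isomorphism; minimality of
`bigOne G` gives the claim (`map_mem_bigOne`). Higher levels follow by induction, since `F`
preserves distinguished triangles and retracts.
-/

open CategoryTheory Limits Pretriangulated MonoidalCategory

universe v u v₂ u₂

namespace Stmt

variable {C : Type u} [Category.{v} C]

/-- `X` is a retract (direct summand) of `Y`. -/
def IsRetract (X Y : C) : Prop := ∃ (i : X ⟶ Y) (p : Y ⟶ X), i ≫ p = 𝟙 X

section Big

variable [HasZeroObject C] [Preadditive C] [HasShift C ℤ]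
  [∀ n : ℤ, (shiftFunctor C n).Additive] [Pretriangulated C]

/-- The objects of `⟨G⟩̄₁`: the smallest collection of objects containing `G` that is
closed under shifts, arbitrary small coproducts, and direct summands (retracts). -/
def bigOne (G : C) : Set C :=
  ⋂₀ {S : Set C | G ∈ S ∧ (∀ X ∈ S, ∀ n : ℤ, (X⟦n⟧ : C) ∈ S) ∧
      (∀ (ι : Type v) (f : ι → C) (_ : HasCoproduct f), (∀ i, f i ∈ S) → (∐ f) ∈ S) ∧
      (∀ X Y : C, Y ∈ S → IsRetract X Y → X ∈ S)}

/-- The objects of `⟨G⟩̄ₙ`: `⟨G⟩̄₀` consists of the objects isomorphic to `0`;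
`⟨G⟩̄₁` is `bigOne G`; for `n ≥ 2`, `⟨G⟩̄ₙ` consists of the direct summands of objects `E`
fitting in a distinguished triangle `A ⟶ E ⟶ B ⟶ A⟦1⟧` with `A ∈ ⟨G⟩̄ₙ₋₁` and `B ∈ ⟨G⟩̄₁`. -/
def bigLevel (G : C) : ℕ → Set C
  | 0 => {X | IsZero X}
  | 1 => bigOne G
  | (n + 2) => {X | ∃ (E A B : C) (f : A ⟶ E) (g : E ⟶ B) (h : B ⟶ A⟦(1 : ℤ)⟧),
      (Triangle.mk f g h ∈ distTriang C) ∧ A ∈ bigLevel G (n + 1) ∧ B ∈ bigOne G ∧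
      IsRetract X E}

end Big

section Closure

variable [HasZeroObject C] [Preadditive C] [HasShift C ℤ]
  [∀ n : ℤ, (shiftFunctor C n).Additive] [Pretriangulated C]

lemma IsRetract.of_iso {X Y : C} (e : X ≅ Y) : IsRetract X Y :=
  ⟨e.hom, e.inv, e.hom_inv_id⟩

lemma IsRetract.map {X Y : C} (h : IsRetract X Y) (F : C ⥤ C) :
    IsRetract (F.obj X) (F.obj Y) := by
  obtain ⟨i, p, hip⟩ := h
  exact ⟨F.map i, F.map p, by rw [← F.map_comp, hip, F.map_id]⟩

lemma mem_bigOne_self (G : C) : G ∈ bigOne G := fun _ hS => hS.1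

lemma shift_mem_bigOne {G X : C} (hX : X ∈ bigOne G) (n : ℤ) : (X⟦n⟧ : C) ∈ bigOne G :=
  fun S hS => hS.2.1 X (hX S hS) n

lemma coproduct_mem_bigOne {G : C} {ι : Type v} (f : ι → C) [HasCoproduct f]
    (hf : ∀ i, f i ∈ bigOne G) : (∐ f) ∈ bigOne G :=
  fun S hS => hS.2.2.1 ι f inferInstance fun i => hf i S hS

lemma retract_mem_bigOne {G X Y : C} (hY : Y ∈ bigOne G) (h : IsRetract X Y) :
    X ∈ bigOne G :=
  fun S hS => hS.2.2.2 X Y (hY S hS) h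

/-- The preimage of `bigOne (F.obj G)` under `F` contains `G` and is closed under shifts,
coproducts and retracts, so it contains `bigOne G` by minimality. -/
lemma map_mem_bigOne [HasCoproducts.{v} C] (F : C ⥤ C) [F.CommShift ℤ]
    [∀ J : Type v, PreservesColimitsOfShape (Discrete J) F]
    {G X : C} (hX : X ∈ bigOne G) : F.obj X ∈ bigOne (F.obj G) := by
  refine hX {Y | F.obj Y ∈ bigOne (F.obj G)} ⟨mem_bigOne_self _, ?_, ?_, ?_⟩
  · intro Y hY n
    exact retract_mem_bigOne (shift_mem_bigOne hY n) (.of_iso ((F.commShiftIso n).app Y))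
  · intro ι f _ hf
    exact retract_mem_bigOne (coproduct_mem_bigOne (fun i => F.obj (f i)) hf)
      (.of_iso (PreservesCoproduct.iso F f))
  · intro Y Z hZ h
    exact retract_mem_bigOne hZ (h.map F)

/-- The general form of the theorem: `F` need only be an exact endofunctor preserving small
coproducts. -/
lemma map_mem_bigLevel [HasCoproducts.{v} C] (F : C ⥤ C) [F.CommShift ℤ] [F.IsTriangulated]
    [∀ J : Type v, PreservesColimitsOfShape (Discrete J) F] (G : C) :
    ∀ (j : ℕ) (X : C), X ∈ bigLevel G j → F.obj X ∈ bigLevel (F.obj G) j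
  | 0, _, hX => F.map_isZero hX
  | 1, _, hX => map_mem_bigOne F hX
  | n + 2, _, ⟨E, A, B, f, g, h, hT, hA, hB, hr⟩ =>
      ⟨F.obj E, F.obj A, F.obj B, F.map f, F.map g, F.map h ≫ (F.commShiftIso (1 : ℤ)).hom.app A,
        F.map_distinguished _ hT, map_mem_bigLevel F G (n + 1) A hA, map_mem_bigOne F hB, hr.map F⟩

end Closure

/--
in a triangulated category with all small coproducts, equipped with a
monoidal structure, if the endofunctor `(-) ⊗ E` is exact (i.e. commutes with shift and
sends distinguished triangles to distinguished triangles) and preserves small coproducts,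
then `T ∈ ⟨G⟩̄ⱼ` implies `T ⊗ E ∈ ⟨G ⊗ E⟩̄ⱼ`.
-/
theorem statement0 [HasZeroObject C] [Preadditive C] [HasShift C ℤ]
    [∀ n : ℤ, (shiftFunctor C n).Additive] [Pretriangulated C]
    [HasCoproducts.{v} C] [MonoidalCategory C]
    (E : C) [(tensorRight E).CommShift ℤ] [(tensorRight E).IsTriangulated]
    [∀ J : Type v, PreservesColimitsOfShape (Discrete J) (tensorRight E)]
    (G : C) (j : ℕ) (T : C) (hT : T ∈ bigLevel G j) :
    T ⊗ E ∈ bigLevel (G ⊗ E) j :=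
  map_mem_bigLevel (tensorRight E) G j T hT

end Stmt
end

section
/- Let 𝒯 be a triangulated category and let G, H be objects of 𝒯. If A belongs to ⟨G⟩_n and B belongs to ⟨H⟩_m, then the direct sum A ⊕ B belongs to ⟨G ⊕ H⟩_{max{n,m}}. -/
/-!
Everything is compared inside `⟨G ⊞ H⟩`. Since `G` and `H` are retracts of `G ⊞ H`, both
`⟨G⟩ₙ` and `⟨H⟩ₙ` lie in `⟨G ⊞ H⟩ₙ` (`classLevel_subset`), and the levels increase with `n`
(`classLevel_mono`), so `A` and `B` both lie in `⟨G ⊞ H⟩_{max n m}`. It remains that each level is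
closed under binary direct sums (`biprod_mem_classLevel`), which follows by induction on the level
from the fact that a direct sum of two distinguished triangles is distinguished.
-/

open CategoryTheory Limits Pretriangulated MonoidalCategory

universe v u v₂ u₂

namespace Stmt

variable {C : Type u} [Category.{v} C]

section Classical

variable [HasZeroObject C] [Preadditive C] [HasShift C ℤ]
  [∀ n : ℤ, (shiftFunctor C n).Additive] [Pretriangulated C] [HasBinaryBiproducts C]

/-- The objects of `⟨G⟩₁`: the smallest collection of objects containing `G` that is
closed under shifts, finite coproducts, and direct summands (retracts).
(Closure under finite coproducts amounts to closure under binary direct sums, since the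
empty coproduct `0` is a retract of any object.) -/
def classOne (G : C) : Set C :=
  ⋂₀ {S : Set C | G ∈ S ∧ (∀ X ∈ S, ∀ n : ℤ, (X⟦n⟧ : C) ∈ S) ∧
      (∀ X Y : C, X ∈ S → Y ∈ S → (X ⊞ Y) ∈ S) ∧
      (∀ X Y : C, Y ∈ S → IsRetract X Y → X ∈ S)}

/-- The objects of `⟨G⟩ₙ`: `⟨G⟩₀` consists of the objects isomorphic to `0`;
`⟨G⟩₁` is `classOne G`; for `n ≥ 2`, `⟨G⟩ₙ` consists of the direct summands of objects `E`
fitting in a distinguished triangle `A ⟶ E ⟶ B ⟶ A⟦1⟧` with `A ∈ ⟨G⟩ₙ₋₁` and `B ∈ ⟨G⟩₁`. -/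
def classLevel (G : C) : ℕ → Set C
  | 0 => {X | IsZero X}
  | 1 => classOne G
  | (n + 2) => {X | ∃ (E A B : C) (f : A ⟶ E) (g : E ⟶ B) (h : B ⟶ A⟦(1 : ℤ)⟧),
      (Triangle.mk f g h ∈ distTriang C) ∧ A ∈ classLevel G (n + 1) ∧ B ∈ classOne G ∧
      IsRetract X E}

end Classical

section Auxiliary

theorem IsRetract.trans {X Y Z : C} (h : IsRetract X Y) (h' : IsRetract Y Z) : IsRetract X Z := by
  obtain ⟨i, p, hip⟩ := h
  obtain ⟨j, q, hjq⟩ := h'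
  exact ⟨i ≫ j, q ≫ p, by simp [reassoc_of% hjq, hip]⟩

theorem IsRetract.refl (X : C) : IsRetract X X := ⟨𝟙 X, 𝟙 X, by simp⟩

theorem IsRetract.isZero [HasZeroMorphisms C] {X Y : C} (h : IsRetract X Y) (hY : IsZero Y) :
    IsZero X := by
  obtain ⟨i, p, hip⟩ := h
  rw [IsZero.iff_id_eq_zero, ← hip, hY.eq_of_tgt i 0, zero_comp]

theorem IsRetract.of_isZero [HasZeroMorphisms C] {X : C} (hX : IsZero X) (Y : C) :
    IsRetract X Y := ⟨0, 0, hX.eq_of_src _ _⟩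

variable [Preadditive C] [HasBinaryBiproducts C]

theorem IsRetract.biprod {X X' Y Y' : C} (h : IsRetract X Y) (h' : IsRetract X' Y') :
    IsRetract (X ⊞ X') (Y ⊞ Y') := by
  obtain ⟨i, p, hip⟩ := h
  obtain ⟨j, q, hjq⟩ := h'
  exact ⟨biprod.map i j, biprod.map p q, by ext <;> simp [hip, hjq]⟩

theorem isRetract_piObj_biprod (F : Bool → C) [HasProduct F] :
    IsRetract (∏ᶜ F) (F true ⊞ F false) :=
  ⟨biprod.lift (Pi.π F true) (Pi.π F false),
    Pi.lift (fun b => match b with | true => biprod.fst | false => biprod.snd), by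
      ext b; cases b <;> simp⟩

theorem isRetract_biprod_piObj (F : Bool → C) [HasProduct F] :
    IsRetract (F true ⊞ F false) (∏ᶜ F) :=
  ⟨Pi.lift (fun b => match b with | true => biprod.fst | false => biprod.snd),
    biprod.lift (Pi.π F true) (Pi.π F false), by ext <;> simp⟩

variable [HasShift C ℤ]

theorem self_mem_classOne (G : C) : G ∈ classOne G := fun _ hS => hS.1

theorem mem_classOne_of_isRetract {G X Y : C} (hY : Y ∈ classOne G) (h : IsRetract X Y) :
    X ∈ classOne G := fun S hS => hS.2.2.2 X Y (hY S hS) h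

theorem biprod_mem_classOne {G X Y : C} (hX : X ∈ classOne G) (hY : Y ∈ classOne G) :
    (X ⊞ Y) ∈ classOne G := fun S hS => hS.2.2.1 X Y (hX S hS) (hY S hS)

theorem shift_mem_classOne {G X : C} (hX : X ∈ classOne G) (n : ℤ) :
    (X⟦n⟧ : C) ∈ classOne G := fun S hS => hS.2.1 X (hX S hS) n

theorem mem_classOne_of_isZero (G : C) {X : C} (hX : IsZero X) : X ∈ classOne G :=
  mem_classOne_of_isRetract (self_mem_classOne G) (.of_isZero hX G)

/-- `classOne K` has the closure properties defining `classOne G` as soon as it contains `G`. -/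
theorem classOne_subset {G K : C} (h : G ∈ classOne K) : classOne G ⊆ classOne K :=
  fun _ hX => hX _ ⟨h, fun _ hY n => shift_mem_classOne hY n,
    fun _ _ hY hZ => biprod_mem_classOne hY hZ, fun _ _ hZ hr => mem_classOne_of_isRetract hZ hr⟩

variable [HasZeroObject C] [∀ n : ℤ, (shiftFunctor C n).Additive] [Pretriangulated C]

theorem classLevel_subset {G K : C} (h : G ∈ classOne K) :
    ∀ n : ℕ, classLevel G n ⊆ classLevel K n
  | 0 => fun _ hX => hX
  | 1 => classOne_subset h
  | n + 2 => by
    rintro X ⟨E, A, B, f, g, k, hT, hA, hB, hX⟩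
    exact ⟨E, A, B, f, g, k, hT, classLevel_subset h (n + 1) hA, classOne_subset h hB, hX⟩

theorem mem_classLevel_of_isRetract {G X Y : C} :
    ∀ {n : ℕ}, Y ∈ classLevel G n → IsRetract X Y → X ∈ classLevel G n
  | 0, hY, h => h.isZero hY
  | 1, hY, h => mem_classOne_of_isRetract hY h
  | _ + 2, ⟨E, A, B, f, g, k, hT, hA, hB, hY⟩, h => ⟨E, A, B, f, g, k, hT, hA, hB, h.trans hY⟩

theorem classLevel_subset_succ (G : C) : ∀ n : ℕ, classLevel G n ⊆ classLevel G (n + 1)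
  | 0 => fun _ hX => mem_classOne_of_isZero G hX
  | _ + 1 => fun X hX =>
    ⟨X, X, _, 𝟙 X, 0, 0, contractible_distinguished X, hX,
      mem_classOne_of_isZero G (isZero_zero C), .refl X⟩

theorem classLevel_mono (G : C) : Monotone (classLevel G) :=
  monotone_nat_of_le_succ (classLevel_subset_succ G)

/-- Mathlib provides the product of a family of distinguished triangles; here it is taken over
`Bool`, and its vertices are compared with binary biproducts through mutual retractions. -/
theorem biprod_mem_classLevel {G : C} :
    ∀ {n : ℕ} {X Y : C}, X ∈ classLevel G n → Y ∈ classLevel G n → (X ⊞ Y) ∈ classLevel G n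
  | 0, X, Y, hX, hY => by
    have hX' : IsZero X := hX
    have hY' : IsZero Y := hY
    exact (biprod_isZero_iff X Y).2 ⟨hX', hY'⟩
  | 1, _, _, hX, hY => biprod_mem_classOne hX hY
  | n + 2, X, Y, ⟨E, A, B, f, g, k, hT, hA, hB, hX⟩,
      ⟨E', A', B', f', g', k', hT', hA', hB', hY⟩ => by
    let T : Bool → Triangle C := fun b =>
      match b with
      | true => Triangle.mk f g k
      | false => Triangle.mk f' g' k'
    have hTd : productTriangle T ∈ distTriang C :=
      productTriangle_distinguished T (by rintro (_ | _) <;> assumption)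
    exact ⟨_, _, _, _, _, _, hTd,
      mem_classLevel_of_isRetract (biprod_mem_classLevel hA hA')
        (isRetract_piObj_biprod fun b => (T b).obj₁),
      mem_classOne_of_isRetract (biprod_mem_classOne hB hB')
        (isRetract_piObj_biprod fun b => (T b).obj₃),
      (hX.biprod hY).trans (isRetract_biprod_piObj fun b => (T b).obj₂)⟩

end Auxiliary

/--
in a triangulated category, if `A ∈ ⟨G⟩ₙ` and `B ∈ ⟨H⟩ₘ`, then
`A ⊕ B ∈ ⟨G ⊕ H⟩_{max n m}`.
-/
theorem statement11 [HasZeroObject C] [Preadditive C] [HasShift C ℤ]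
    [∀ n : ℤ, (shiftFunctor C n).Additive] [Pretriangulated C] [HasBinaryBiproducts C]
    (G H : C) (n m : ℕ) (A B : C) (hA : A ∈ classLevel G n) (hB : B ∈ classLevel H m) :
    (A ⊞ B) ∈ classLevel (G ⊞ H) (max n m) := by
  have hG : G ∈ classOne (G ⊞ H) :=
    mem_classOne_of_isRetract (self_mem_classOne _) ⟨biprod.inl, biprod.fst, by simp⟩
  have hH : H ∈ classOne (G ⊞ H) :=
    mem_classOne_of_isRetract (self_mem_classOne _) ⟨biprod.inr, biprod.snd, by simp⟩
  exact biprod_mem_classLevel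
    (classLevel_mono _ (le_max_left n m) (classLevel_subset hG n hA))
    (classLevel_mono _ (le_max_right n m) (classLevel_subset hH m hB))

end Stmt
end

section
/- Let 𝒯 be a triangulated category, 𝒮 ⊆ 𝒯 a thick triangulated subcategory, and P an object of 𝒯. Let 𝒯' denote the smallest thick subcategory of 𝒯 containing all objects of the form P ⊕ H with H an object of 𝒮. Then for every object E of 𝒯' there exists an object C of 𝒮 such that E belongs to the smallest thick subcategory of 𝒯 containing P ⊕ C. -/
/-!
The objects lying in `thickClosure {P ⊞ Z}` for some `Z ∈ S` form a directed union of thick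
subcategories, hence a thick subcategory. Directedness holds because `S` is closed under
biproducts (`IsThickSubcat.biprod_mem`) and `P ⊞ Z₁`, `P ⊞ Z₂` are both retracts of
`P ⊞ (Z₁ ⊞ Z₂)` (`thickClosure_biprod_mono`). This thick subcategory contains every `P ⊞ H` with
`H ∈ S`, so it contains the thick closure of these objects.
-/

open CategoryTheory Limits Pretriangulated

universe v u v₂ u₂

namespace Stmt

variable {C : Type u} [Category.{v} C]

section Thick

variable [HasZeroObject C] [Preadditive C] [HasShift C ℤ]
  [∀ n : ℤ, (shiftFunctor C n).Additive] [Pretriangulated C]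

/-- A collection of objects of a pretriangulated category is a thick (triangulated)
subcategory when it contains the zero objects, and is closed under shifts, cones of
morphisms between its objects (two-out-of-three for distinguished triangles), and
direct summands (retracts). -/
def IsThickSubcat (S : Set C) : Prop :=
  (∀ X : C, IsZero X → X ∈ S) ∧
  (∀ X ∈ S, ∀ n : ℤ, (X⟦n⟧ : C) ∈ S) ∧
  (∀ T : Triangle C, (T ∈ distTriang C) → T.obj₁ ∈ S → T.obj₂ ∈ S → T.obj₃ ∈ S) ∧
  (∀ X Y : C, Y ∈ S → IsRetract X Y → X ∈ S)

/-- The smallest thick subcategory (as a collection of objects) containing `A`. -/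
def thickClosure (A : Set C) : Set C := ⋂₀ {S : Set C | A ⊆ S ∧ IsThickSubcat S}

end Thick

section Helpers

variable [HasZeroObject C] [Preadditive C] [HasShift C ℤ]
  [∀ n : ℤ, (shiftFunctor C n).Additive] [Pretriangulated C]

lemma subset_thickClosure (A : Set C) : A ⊆ thickClosure A :=
  fun _ hX _ hT => hT.1 hX

lemma thickClosure_subset {A T : Set C} (hA : A ⊆ T) (hT : IsThickSubcat T) :
    thickClosure A ⊆ T :=
  fun _ hX => hX T ⟨hA, hT⟩

lemma isThickSubcat_thickClosure (A : Set C) : IsThickSubcat (thickClosure A) := by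
  refine ⟨?_, ?_, ?_, ?_⟩
  · intro X hX T hT
    exact hT.2.1 X hX
  · intro X hX n T hT
    exact hT.2.2.1 X (hX T hT) n
  · intro Δ hΔ h₁ h₂ T hT
    exact hT.2.2.2.1 Δ hΔ (h₁ T hT) (h₂ T hT)
  · intro X Y hY hXY T hT
    exact hT.2.2.2.2 X Y (hY T hT) hXY

variable [HasBinaryBiproducts C]

lemma IsThickSubcat.biprod_mem {S : Set C} (hS : IsThickSubcat S) {X Y : C}
    (hX : X ∈ S) (hY : Y ∈ S) : (X ⊞ Y : C) ∈ S :=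
  -- `X ⊞ Y` is the cone of the zero morphism `Y⟦-1⟧ ⟶ X`.
  hS.2.2.1 _ (inv_rot_of_distTriang _ (binaryBiproductTriangle_distinguished X Y))
    (hS.2.1 Y hY (-1)) hX

lemma thickClosure_biprod_mono (P : C) {Z W : C} (h : IsRetract Z W) :
    thickClosure {(P ⊞ Z : C)} ⊆ thickClosure {(P ⊞ W : C)} := by
  obtain ⟨i, p, hip⟩ := h
  refine thickClosure_subset ?_ (isThickSubcat_thickClosure _)
  rintro _ rfl
  refine (isThickSubcat_thickClosure _).2.2.2 _ _ (subset_thickClosure _ rfl)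
    ⟨biprod.map (𝟙 P) i, biprod.map (𝟙 P) p, ?_⟩
  ext <;> simp [hip]

end Helpers

/--
let 𝒮 ⊆ 𝒯 be a thick triangulated subcategory and `P` an object of 𝒯.
If 𝒯' is the smallest thick subcategory of 𝒯 containing all objects `P ⊕ H` with
`H ∈ 𝒮`, then every object `E` of 𝒯' belongs to the smallest thick subcategory of 𝒯
containing `P ⊕ Z` for some object `Z` of 𝒮.
-/
theorem statement14 [HasZeroObject C] [Preadditive C] [HasShift C ℤ]
    [∀ n : ℤ, (shiftFunctor C n).Additive] [Pretriangulated C] [HasBinaryBiproducts C]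
    (S : Set C) (hS : IsThickSubcat S) (P : C)
    (E : C) (hE : E ∈ thickClosure ((fun H => (P ⊞ H : C)) '' S)) :
    ∃ Z ∈ S, E ∈ thickClosure {(P ⊞ Z : C)} := by
  refine thickClosure_subset (T := {E | ∃ Z ∈ S, E ∈ thickClosure {(P ⊞ Z : C)}}) ?_ ?_ hE
  · rintro _ ⟨H, hH, rfl⟩
    exact ⟨H, hH, subset_thickClosure _ rfl⟩
  · refine ⟨?_, ?_, ?_, ?_⟩
    · intro X hX
      exact ⟨X, hS.1 X hX, (isThickSubcat_thickClosure _).1 X hX⟩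
    · rintro X ⟨Z, hZ, hX⟩ n
      exact ⟨Z, hZ, (isThickSubcat_thickClosure _).2.1 X hX n⟩
    · rintro Δ hΔ ⟨Z₁, hZ₁, h₁⟩ ⟨Z₂, hZ₂, h₂⟩
      exact ⟨Z₁ ⊞ Z₂, hS.biprod_mem hZ₁ hZ₂, (isThickSubcat_thickClosure _).2.2.1 Δ hΔ
        (thickClosure_biprod_mono P ⟨biprod.inl, biprod.fst, by simp⟩ h₁)
        (thickClosure_biprod_mono P ⟨biprod.inr, biprod.snd, by simp⟩ h₂)⟩
    · rintro X Y ⟨Z, hZ, hY⟩ hXY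
      exact ⟨Z, hZ, (isThickSubcat_thickClosure _).2.2.2 X Y hY hXY⟩

end Stmt
end

section
/- Let R be a commutative Noetherian ring and let l ≥ 0 be a natural number. Let 𝒵 be the set of objects of the derived category D(Mod R) given by the quotient rings R/𝔭, regarded as complexes concentrated in degree 0, where 𝔭 ranges over the prime ideals of R with Krull dimension of R/𝔭 at most l. Then every object E of D(Mod R) whose homology modules are all finitely generated, vanish in all but finitely many degrees, and satisfy that every prime 𝔭 in the support of some homology module of E has Krull dimension of R/𝔭 at most l, belongs to the smallest thick subcategory of D(Mod R) containing 𝒵. (This is the affine case of the paper's Proposition: objects of D^b_coh supported in dimension at most l are finitely built from the structure sheaves of integral closed subschemes of dimension at most l.) -/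
/-!
Any thick subcategory `S` containing the modules `R ⧸ 𝔭` with `dim R ⧸ 𝔭 ≤ l` contains `E`,
by two dévissages.

* Modules (`single_mem_of_finite`): a finitely generated `M` has a filtration with subquotients
  `R ⧸ 𝔭`, and every such `𝔭` lies in the support of `M`. Short exact sequences give distinguished
  triangles, and `S` is closed under extensions (`IsThickSubcat.ext₂`), so `M` lies in `S`.
* Complexes (`mem_of_isGE_of_isLE`): induction on the length of an interval outside which the
  homology vanishes. The truncation triangle `X ⟶ E ⟶ Y ⟶ X⟦1⟧` cutting at the lowest degree `a`
  has `X` a shift of a module embedding into `H^a(E)`, and `Y` has homology in a shorter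
  interval, each `H^i(Y)` being zero or a quotient of `H^i(E)`. Over a Noetherian ring,
  finite generation and the support condition pass to submodules and quotients.
-/

open CategoryTheory Limits Pretriangulated

universe v u v₂ u₂

namespace Stmt

variable {C : Type u} [Category.{v} C]

section Thick

variable [HasZeroObject C] [Preadditive C] [HasShift C ℤ]
  [∀ n : ℤ, (shiftFunctor C n).Additive] [Pretriangulated C]

lemma IsThickSubcat.of_iso {S : Set C} (hS : IsThickSubcat S) {X Y : C} (e : X ≅ Y)
    (hX : X ∈ S) : Y ∈ S :=
  hS.2.2.2 Y X hX ⟨e.inv, e.hom, e.inv_hom_id⟩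

/-- A thick subcategory is closed under extensions: rotate the triangle backwards. -/
lemma IsThickSubcat.ext₂ {S : Set C} (hS : IsThickSubcat S) (T : Triangle C)
    (hT : T ∈ distTriang C) (h₁ : T.obj₁ ∈ S) (h₃ : T.obj₃ ∈ S) : T.obj₂ ∈ S :=
  hS.2.2.1 T.invRotate (inv_rot_of_distTriang _ hT) (hS.2.1 _ h₃ (-1)) h₁

end Thick

section Derived

variable {R : Type u} [CommRing R]

/-- Every prime `𝔭` in the support of `M` satisfies `dim R ⧸ 𝔭 ≤ l`. -/
def SuppDimLE (R : Type u) [CommRing R] (l : ℕ) (M : Type u) [AddCommGroup M] [Module R M] :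
    Prop :=
  ∀ p : PrimeSpectrum R, p ∈ Module.support R M →
    ringKrullDim (R ⧸ p.asIdeal) ≤ (l : WithBot (WithTop ℕ))

/-- `M` is finitely generated, and every prime `𝔭` in its support satisfies `dim R ⧸ 𝔭 ≤ l`. -/
def FinSupp (l : ℕ) (M : ModuleCat.{u} R) : Prop := Module.Finite R M ∧ SuppDimLE R l M

lemma FinSupp.of_mono [IsNoetherianRing R] {l : ℕ} {M N : ModuleCat.{u} R} (f : M ⟶ N) [Mono f]
    (h : FinSupp l N) : FinSupp l M := by
  have hf : Function.Injective f.hom := (ModuleCat.mono_iff_injective f).1 inferInstance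
  have := h.1
  exact ⟨Module.Finite.of_injective f.hom hf,
    fun p hp => h.2 p (Module.support_subset_of_injective f.hom hf hp)⟩

lemma FinSupp.of_epi {l : ℕ} {M N : ModuleCat.{u} R} (f : M ⟶ N) [Epi f]
    (h : FinSupp l M) : FinSupp l N := by
  have hf : Function.Surjective f.hom := (ModuleCat.epi_iff_surjective f).1 inferInstance
  have := h.1
  exact ⟨Module.Finite.of_surjective f.hom hf,
    fun p hp => h.2 p (Module.support_subset_of_surjective f.hom hf hp)⟩

lemma FinSupp.of_isZero {l : ℕ} {M : ModuleCat.{u} R} (h : IsZero M) : FinSupp l M := by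
  have := ModuleCat.subsingleton_of_isZero h
  exact ⟨inferInstance, fun p hp => by simp [Module.support_eq_empty] at hp⟩

variable [HasDerivedCategory (ModuleCat.{u} R)]

open DerivedCategory ZeroObject

/-- Dévissage along a prime filtration. -/
lemma single_mem_of_finite [IsNoetherianRing R] {l : ℕ}
    {S : Set (DerivedCategory (ModuleCat.{u} R))} (hS : IsThickSubcat S)
    (hprime : ∀ p : Ideal R, p.IsPrime → ringKrullDim (R ⧸ p) ≤ (l : WithBot (WithTop ℕ)) →
      (singleFunctor (ModuleCat.{u} R) 0).obj (ModuleCat.of R (R ⧸ p)) ∈ S)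
    (M : Type u) [AddCommGroup M] [Module R M] (hM : Module.Finite R M) (hs : SuppDimLE R l M) :
    (singleFunctor (ModuleCat.{u} R) 0).obj (ModuleCat.of R M) ∈ S := by
  revert hs
  induction hM using IsNoetherianRing.induction_on_isQuotientEquivQuotientPrime R with
  | subsingleton N =>
    intro _
    exact hS.1 _ (Functor.map_isZero _ (ModuleCat.isZero_of_subsingleton _))
  | quotient N p e =>
    intro hs
    refine hS.of_iso ((singleFunctor (ModuleCat.{u} R) 0).mapIso e.toModuleIso.symm)
      (hprime p.1 p.2 (hs p ?_))
    rw [e.support_eq, Module.support_eq_zeroLocus, Ideal.annihilator_quotient]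
    exact (PrimeSpectrum.mem_zeroLocus _ _).2 le_rfl
  | exact N₁ N₂ N₃ f g hf hg hfg h₁ h₃ =>
    intro hs
    let T := ShortComplex.mk (ModuleCat.ofHom f) (ModuleCat.ofHom g)
      (by ext x; exact hfg.apply_apply_eq_zero x)
    have hT : T.ShortExact :=
      { exact := (ShortComplex.ShortExact.moduleCat_exact_iff_function_exact T).2 hfg
        mono_f := (ModuleCat.mono_iff_injective _).2 hf
        epi_g := (ModuleCat.epi_iff_surjective _).2 hg }
    exact hS.ext₂ _ hT.singleTriangle_distinguished
      (h₁ fun p hp => hs p (Module.support_subset_of_injective f hf hp))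
      (h₃ fun p hp => hs p (Module.support_subset_of_surjective g hg hp))

/-- Dévissage along the canonical truncations; the homology of `E` lives in `[a, a + k)`. -/
lemma mem_of_isGE_of_isLE [IsNoetherianRing R] {l : ℕ}
    {S : Set (DerivedCategory (ModuleCat.{u} R))} (hS : IsThickSubcat S)
    (hprime : ∀ p : Ideal R, p.IsPrime → ringKrullDim (R ⧸ p) ≤ (l : WithBot (WithTop ℕ)) →
      (singleFunctor (ModuleCat.{u} R) 0).obj (ModuleCat.of R (R ⧸ p)) ∈ S)
    (k : ℕ) (a : ℤ) (E : DerivedCategory (ModuleCat.{u} R))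
    (hE : ∀ i : ℤ, FinSupp l ((homologyFunctor (ModuleCat.{u} R) i).obj E))
    (hlt : ∀ i : ℤ, i < a → IsZero ((homologyFunctor (ModuleCat.{u} R) i).obj E))
    (hge : ∀ i : ℤ, a + k ≤ i → IsZero ((homologyFunctor (ModuleCat.{u} R) i).obj E)) :
    E ∈ S := by
  induction k generalizing a E with
  | zero =>
    have h0 : ∀ i : ℤ, IsZero ((homologyFunctor (ModuleCat.{u} R) i).obj E) := fun i =>
      (lt_or_ge i a).elim (hlt i) fun h => hge i (by simpa using h)
    have : IsIso (0 : E ⟶ 0) := by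
      rw [isIso_iff]
      intro n
      exact (h0 n).isIso (Functor.map_isZero _ (isZero_zero _)) _
    exact hS.1 _ ((isZero_zero _).of_iso (asIso (0 : E ⟶ 0)))
  | succ k ih =>
    obtain ⟨X, Y, hX, hY, f, g, h, hT⟩ :=
      (TStructure.t (C := ModuleCat.{u} R)).exists_triangle E a (a + 1) rfl
    have hX' : X.IsLE a := ⟨hX⟩
    have hY' : Y.IsGE (a + 1) := ⟨hY⟩
    have hX0 := (isLE_iff X a).1 hX'
    have hY0 := (isGE_iff Y (a + 1)).1 hY'
    -- `H^{i-1}(Y) = 0` for `i ≤ a`, so `H^i(X) ⟶ H^i(E)` is injective in these degrees.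
    have hmono : ∀ i ≤ a, Mono ((homologyFunctor (ModuleCat.{u} R) i).map f) := fun i hi =>
      (HomologySequence.mono_homologyMap_mor₁_iff _ hT (i - 1) i (by lia)).2
        ((hY0 (i - 1) (by lia)).eq_of_src _ _)
    -- `H^{i+1}(X) = 0` for `a ≤ i`, so `H^i(E) ⟶ H^i(Y)` is surjective in these degrees.
    have hepi : ∀ i, a ≤ i → Epi ((homologyFunctor (ModuleCat.{u} R) i).map g) := fun i hi =>
      (HomologySequence.epi_homologyMap_mor₂_iff _ hT i (i + 1) rfl).2
        ((hX0 (i + 1) (by lia)).eq_of_tgt _ _)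
    refine hS.ext₂ _ hT ?_ ?_
    · change X ∈ S
      have hXge : X.IsGE a := (isGE_iff X a).2 fun i hi => by
        have := hmono i hi.le
        exact (hlt i hi).of_mono ((homologyFunctor (ModuleCat.{u} R) i).map f)
      obtain ⟨M, ⟨e⟩⟩ := X.exists_iso_singleFunctor_obj_of_isGE_of_isLE a
      have hM : FinSupp l M := by
        have := hmono a le_rfl
        exact (hE a).of_mono
          (((singleFunctorCompHomologyFunctorIso (ModuleCat.{u} R) a).app M).inv ≫
            (homologyFunctor (ModuleCat.{u} R) a).map e.inv ≫
            (homologyFunctor (ModuleCat.{u} R) a).map f)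
      have hM0 := hS.2.1 _ (single_mem_of_finite hS hprime M hM.1 hM.2) (-a)
      exact hS.of_iso ((((singleFunctors (ModuleCat.{u} R)).shiftIso (-a) a 0
        (by lia)).app M) ≪≫ e.symm) hM0
    · change Y ∈ S
      refine ih (a + 1) Y (fun i => ?_) (fun i hi => hY0 i hi) (fun i hi => ?_)
      · rcases lt_or_ge i (a + 1) with hi | hi
        · exact .of_isZero (hY0 i hi)
        · have := hepi i (by lia)
          exact (hE i).of_epi ((homologyFunctor (ModuleCat.{u} R) i).map g)
      · have := hepi i (by lia)
        exact (hge i (by push_cast; lia)).of_epi ((homologyFunctor (ModuleCat.{u} R) i).map g)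

end Derived

/--
let `R` be a commutative Noetherian ring and `l ≥ 0`. Let `𝒵` be the set
of objects of `D(Mod R)` of the form `R ⧸ 𝔭` (in degree `0`) for `𝔭` prime with
`dim (R ⧸ 𝔭) ≤ l`. Then every object `E` of `D(Mod R)` with bounded finitely generated
homology such that every prime in the support of some homology module of `E` satisfies
`dim (R ⧸ 𝔭) ≤ l` belongs to the smallest thick subcategory containing `𝒵`.
-/
theorem statement15 (R : Type u) [CommRing R] [IsNoetherianRing R]
    [HasDerivedCategory (ModuleCat.{u} R)] (l : ℕ)
    (Z : Set (DerivedCategory (ModuleCat.{u} R)))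
    (hZ : Z = {X | ∃ (p : Ideal R), p.IsPrime ∧
      ringKrullDim (R ⧸ p) ≤ (l : WithBot (WithTop ℕ)) ∧
      X = (DerivedCategory.singleFunctor (ModuleCat.{u} R) 0).obj (ModuleCat.of R (R ⧸ p))})
    (E : DerivedCategory (ModuleCat.{u} R))
    (hfg : ∀ m : ℤ,
      Module.Finite R ((DerivedCategory.homologyFunctor (ModuleCat.{u} R) m).obj E))
    (hbdd : {m : ℤ |
      ¬ IsZero ((DerivedCategory.homologyFunctor (ModuleCat.{u} R) m).obj E)}.Finite)
    (hsupp : ∀ (m : ℤ) (p : PrimeSpectrum R),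
      p ∈ Module.support R ((DerivedCategory.homologyFunctor (ModuleCat.{u} R) m).obj E) →
      ringKrullDim (R ⧸ p.asIdeal) ≤ (l : WithBot (WithTop ℕ))) :
    E ∈ thickClosure Z := by
  rintro S ⟨hZS, hS⟩
  subst hZ
  obtain ⟨a, ha⟩ := hbdd.bddBelow
  obtain ⟨b, hb⟩ := hbdd.bddAbove
  refine mem_of_isGE_of_isLE (l := l) hS (fun p hp hd => hZS ⟨p, hp, hd, rfl⟩)
    (b + 1 - a).toNat a E (fun m => ⟨hfg m, hsupp m⟩) (fun i hi => ?_) (fun i hi => ?_)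
  · by_contra h
    exact absurd (ha h) (by lia)
  · by_contra h
    exact absurd (hb h) (by lia)

end Stmt
end
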